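/- arXiv:2109.11813 — 4 statements merged into one kernel-verified Lean document; each statement's English description precedes it below -/
import Mathlib

section
/- For every shift t₁, t₂ ∈ {0, 1, …, L−1}, every triple of indices i₁, i₂, i₃ in {1, …, p} that are not all equal, and every j ∈ ℤ, one has x[j − ℓ_{i₁}] · x[j + t₁ − ℓ_{i₂}] · x[j + t₂ − ℓ_{i₃}] = 0. -/
/-!
Two nonzero values of a signal supported in a window of width `w` are taken at points less than `w`
apart. A relative shift of size at most `T` adds at most `T` to this, so occurrences whose
translations are at least `w + T` apart are never nonzero together. If three indices are not all
equal, the first one differs from one of the others, and this applies to that pair.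
-/

section SeparatedOccurrences

variable {G R : Type*} [AddCommGroup G] [LinearOrder G] [IsOrderedAddMonoid G] {x : G → R} {w T : G}

theorem abs_sub_lt_of_support_subset_Ico [Zero R] (hx : x.support ⊆ Set.Ico 0 w) {m n : G}
    (hm : x m ≠ 0) (hn : x n ≠ 0) : |m - n| < w :=
  abs_sub_lt_of_nonneg_of_lt (hx hm).1 (hx hm).2 (hx hn).1 (hx hn).2

theorem eq_zero_or_eq_zero_of_add_le_abs_sub [Zero R] (hx : x.support ⊆ Set.Ico 0 w) {a b t : G}
    (hsep : w + T ≤ |a - b|) (ht : |t| ≤ T) (j : G) : x (j - a) = 0 ∨ x (j + t - b) = 0 := by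
  by_contra! ⟨ha, hb⟩
  have hclose : |j + t - b - (j - a)| < w := abs_sub_lt_of_support_subset_Ico hx hb ha
  refine hsep.not_gt ?_
  calc |a - b| = |j + t - b - (j - a) - t| := by congr 1; abel
    _ ≤ |j + t - b - (j - a)| + |t| := abs_sub _ _
    _ < w + T := add_lt_add_of_lt_of_le hclose ht

theorem separated_occurrences_third_order_general [MulZeroClass R] {ι : Type*}
    (hx : x.support ⊆ Set.Ico 0 w) {ℓ : ι → G}
    (hsep : Pairwise fun i₁ i₂ ↦ w + T ≤ |ℓ i₁ - ℓ i₂|) {t₁ t₂ : G} (ht₁ : |t₁| ≤ T)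
    (ht₂ : |t₂| ≤ T) {i₁ i₂ i₃ : ι} (hne : ¬(i₁ = i₂ ∧ i₂ = i₃)) (j : G) :
    x (j - ℓ i₁) * x (j + t₁ - ℓ i₂) * x (j + t₂ - ℓ i₃) = 0 := by
  obtain h₁₂ | h₁₃ : i₁ ≠ i₂ ∨ i₁ ≠ i₃ := by grind
  · obtain h | h := eq_zero_or_eq_zero_of_add_le_abs_sub hx (hsep h₁₂) ht₁ j <;> simp [h]
  · obtain h | h := eq_zero_or_eq_zero_of_add_le_abs_sub hx (hsep h₁₃) ht₂ j <;> simp [h]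

end SeparatedOccurrences

/-- **Separated occurrences do not correlate (third order).**
Under the separation condition `|ℓ_{i₁} - ℓ_{i₂}| ≥ 2L - 1`, for shifts
`t₁, t₂ ∈ {0, …, L-1}` and indices `i₁, i₂, i₃` that are not all equal,
`x[j - ℓ_{i₁}] ⬝ x[j + t₁ - ℓ_{i₂}] ⬝ x[j + t₂ - ℓ_{i₃}] = 0` for all `j`. -/
theorem separated_occurrences_third_order
    (L p : ℕ) (hL : 1 ≤ L) (hp : 1 ≤ p)
    (x : ℤ → ℝ) (hx : ∀ j : ℤ, j ∉ Set.Ico (0 : ℤ) (L : ℤ) → x j = 0)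
    (ℓ : Fin p → ℤ)
    (hsep : ∀ i₁ i₂ : Fin p, i₁ ≠ i₂ → 2 * (L : ℤ) - 1 ≤ |ℓ i₁ - ℓ i₂|)
    (t₁ t₂ : ℤ) (ht₁ : t₁ ∈ Set.Icc (0 : ℤ) ((L : ℤ) - 1)) (ht₂ : t₂ ∈ Set.Icc (0 : ℤ) ((L : ℤ) - 1))
    (i₁ i₂ i₃ : Fin p) (hne : ¬(i₁ = i₂ ∧ i₂ = i₃)) (j : ℤ) :
    x (j - ℓ i₁) * x (j + t₁ - ℓ i₂) * x (j + t₂ - ℓ i₃) = 0 := by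
  exact separated_occurrences_third_order_general (T := (L : ℤ) - 1)
    (Function.support_subset_iff'.2 hx) (fun a b hab ↦ by linarith [hsep a b hab])
    ((abs_of_nonneg ht₁.1).trans_le ht₁.2) ((abs_of_nonneg ht₂.1).trans_le ht₂.2) hne j
end

section
/- For every shift ℓ ∈ {0, 1, …, L−1}, the second-order autocorrelation of the clean signal equals p times that of the target signal: Σ_{j∈ℤ} s[j] · s[j+ℓ] = p · Σ_{j∈ℤ} x[j] · x[j+ℓ] (both sums have finitely many nonzero terms). -/
/-!
Write `A f t` for the autocorrelation of `f` at shift `t`. By bilinearity and translation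
invariance, `A s t = ∑ i, ∑ k, A x (t + ℓ i - ℓ k)`. Since `A x` vanishes off the difference set
of the support of `x`, hence at all shifts of absolute value at least `L`, the separation condition
leaves only the diagonal terms, each equal to `A x t`.
-/

open Function
open scoped Pointwise

section AddCommGroup

variable {G R ι : Type*} [AddCommGroup G] [NonUnitalNonAssocSemiring R]

/-- The second-order autocorrelation of a signal `f` at shift `t`. It is a `finsum`, so it takes the
junk value `0` when infinitely many of the products are nonzero. -/
noncomputable def autocorrelation (f : G → R) (t : G) : R :=
  ∑ᶠ j, f j * f (j + t)

theorem autocorrelation_eq_zero {f : G → R} {t : G} (ht : t ∉ support f - support f) :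
    autocorrelation f t = 0 := by
  refine finsum_eq_zero_of_forall_eq_zero fun j => ?_
  by_contra hne
  exact ht ⟨j + t, right_ne_zero_of_mul hne, j, left_ne_zero_of_mul hne, add_sub_cancel_left j t⟩

theorem finsum_translate_mul_translate (f : G → R) (a b t : G) :
    ∑ᶠ j, f (j - a) * f (j + t - b) = autocorrelation f (t + a - b) := by
  calc ∑ᶠ j, f (j - a) * f (j + t - b)
      = ∑ᶠ j, f (j - a) * f (j - a + (t + a - b)) :=
        finsum_congr fun j => by rw [show j - a + (t + a - b) = j + t - b by abel]
    _ = ∑ᶠ j, f j * f (j + (t + a - b)) :=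
        finsum_comp_equiv (Equiv.subRight a) (f := fun j => f j * f (j + (t + a - b)))

theorem finite_support_translate_mul {f : G → R} (hf : (support f).Finite) (a : G) (g : G → R) :
    (support fun j => f (j - a) * g j).Finite :=
  (hf.preimage sub_left_injective.injOn).subset fun _ => left_ne_zero_of_mul

variable [Fintype ι]

theorem autocorrelation_sum_translates {f : G → R} (hf : (support f).Finite) (ℓ : ι → G) (t : G) :
    autocorrelation (fun j => ∑ i, f (j - ℓ i)) t =
      ∑ i, ∑ k, autocorrelation f (t + ℓ i - ℓ k) := by
  calc ∑ᶠ j, (∑ i, f (j - ℓ i)) * ∑ k, f (j + t - ℓ k)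
      = ∑ᶠ j, ∑ i, f (j - ℓ i) * ∑ k, f (j + t - ℓ k) :=
        finsum_congr fun _ => Finset.sum_mul ..
    _ = ∑ i, ∑ᶠ j, f (j - ℓ i) * ∑ k, f (j + t - ℓ k) :=
        finsum_sum_comm _ _ fun i _ => finite_support_translate_mul hf (ℓ i) _
    _ = ∑ i, ∑ᶠ j, ∑ k, f (j - ℓ i) * f (j + t - ℓ k) := by simp only [Finset.mul_sum]
    _ = ∑ i, ∑ k, ∑ᶠ j, f (j - ℓ i) * f (j + t - ℓ k) :=
        Finset.sum_congr rfl fun i _ =>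
          finsum_sum_comm _ _ fun _ _ => finite_support_translate_mul hf (ℓ i) _
    _ = ∑ i, ∑ k, autocorrelation f (t + ℓ i - ℓ k) := by
        simp only [finsum_translate_mul_translate]

theorem autocorrelation_sum_translates_of_separated {f : G → R} (hf : (support f).Finite)
    {ℓ : ι → G} {t : G}
    (hsep : Pairwise fun i k => t + ℓ i - ℓ k ∉ support f - support f) :
    autocorrelation (fun j => ∑ i, f (j - ℓ i)) t = Fintype.card ι • autocorrelation f t := by
  have row_sum (i : ι) : ∑ k, autocorrelation f (t + ℓ i - ℓ k) = autocorrelation f t := by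
    rw [Fintype.sum_eq_single i fun k hk => autocorrelation_eq_zero (hsep hk.symm),
      add_sub_cancel_right]
  simp only [autocorrelation_sum_translates hf, row_sum, Finset.sum_const, Finset.card_univ]

end AddCommGroup

section Ordered

variable {G R ι : Type*} [AddCommGroup G] [LinearOrder G] [IsOrderedAddMonoid G]
  [NonUnitalNonAssocSemiring R] [Fintype ι]

theorem abs_lt_of_mem_Ico_sub_Ico {a b u : G} (hu : u ∈ Set.Ico a b - Set.Ico a b) :
    |u| < b - a := by
  obtain ⟨v, ⟨hav, hvb⟩, w, ⟨haw, hwb⟩, rfl⟩ := hu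
  exact abs_sub_lt_iff.mpr ⟨(sub_le_sub_left haw v).trans_lt (sub_lt_sub_right hvb a),
    (sub_le_sub_left hav w).trans_lt (sub_lt_sub_right hwb a)⟩

theorem clean_signal_second_autocorrelation_general {x : G → R} (hfin : (support x).Finite)
    {a b : G} (hx : support x ⊆ Set.Ico a b) {t : G} {ℓ : ι → G}
    (hsep : Pairwise fun i k => b - a + |t| ≤ |ℓ i - ℓ k|)
    {s : G → R} (hs : ∀ j, s j = ∑ i, x (j - ℓ i)) :
    autocorrelation s t = Fintype.card ι • autocorrelation x t := by
  obtain rfl : s = fun j => ∑ i, x (j - ℓ i) := funext hs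
  refine autocorrelation_sum_translates_of_separated hfin fun i k hik hmem => ?_
  have shift_lt : |t + ℓ i - ℓ k| < b - a :=
    abs_lt_of_mem_Ico_sub_Ico (Set.sub_subset_sub hx hx hmem)
  refine (hsep hik).not_gt ?_
  calc |ℓ i - ℓ k| = |(t + ℓ i - ℓ k) - t| := by congr 1; abel
    _ ≤ |t + ℓ i - ℓ k| + |t| := abs_sub _ _
    _ < b - a + |t| := by gcongr

end Ordered

/-- **Second-order autocorrelation of the clean signal.**
Under the separation condition, for shifts `t ∈ {0, …, L-1}`, the second-order
autocorrelation of `s[j] = ∑_i x[j - ℓ_i]` equals `p` times that of `x`. -/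
theorem clean_signal_second_autocorrelation
    (L p : ℕ) (hL : 1 ≤ L) (hp : 1 ≤ p)
    (x : ℤ → ℝ) (hx : ∀ j : ℤ, j ∉ Set.Ico (0 : ℤ) (L : ℤ) → x j = 0)
    (ℓ : Fin p → ℤ)
    (hsep : ∀ i₁ i₂ : Fin p, i₁ ≠ i₂ → 2 * (L : ℤ) - 1 ≤ |ℓ i₁ - ℓ i₂|)
    (s : ℤ → ℝ) (hs : ∀ j : ℤ, s j = ∑ i : Fin p, x (j - ℓ i))
    (t : ℤ) (ht : t ∈ Set.Icc (0 : ℤ) ((L : ℤ) - 1)) :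
    ∑ᶠ j : ℤ, s j * s (j + t) = (p : ℝ) * ∑ᶠ j : ℤ, x j * x (j + t) := by
  have hsupp : support x ⊆ Set.Ico 0 (L : ℤ) := support_subset_iff'.mpr hx
  have hsep_shift : Pairwise fun i k => (L : ℤ) - 0 + |t| ≤ |ℓ i - ℓ k| := fun i k hik => by
    linarith [hsep i k hik, ht.2, abs_of_nonneg ht.1]
  simpa only [autocorrelation, Fintype.card_fin, nsmul_eq_mul] using
    clean_signal_second_autocorrelation_general ((Set.finite_Ico _ _).subset hsupp) hsupp
      hsep_shift hs
end

section
/- Consistency of the generalized method of moments estimator: let Θ be a compact metric space, m ≥ 1 an integer, and θ₀ ∈ Θ. Let g : Θ → ℝ^m be continuous with g(θ) = 0 if and only if θ = θ₀. Let g_N : Θ → ℝ^m (N ∈ ℕ) be functions converging to g uniformly on Θ, and let W_N be symmetric positive semidefinite m×m real matrices converging (entrywise) to a symmetric positive definite matrix W. If θ̂_N ∈ Θ is any sequence of global minimizers of the weighted least-squares objective, i.e. g_N(θ̂_N)ᵀ W_N g_N(θ̂_N) ≤ g_N(θ)ᵀ W_N g_N(θ) for all θ ∈ Θ, then θ̂_N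 → θ₀ as N → ∞. -/
open Filter Matrix

/-!
Uniform convergence to a continuous limit implies *continuous* convergence, `F n y → f x` as
`n → ∞` and `y → x` jointly, which, unlike uniform convergence, is preserved by composition with
an arbitrary continuous map. So the GMM objectives converge continuously to
`θ ↦ g θ ⬝ᵥ W *ᵥ g θ`, which is positive away from `θ₀`, while their values along the estimators
are bounded by their values at `θ₀`, which tend to `0`. Hence no `θ ≠ θ₀` can be a cluster point of
the estimators, and by compactness they converge to `θ₀`.
-/

open Topology

section ContinuousConvergence

variable {ι X Y : Type*} [TopologicalSpace X] {l : Filter ι}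

/-- Continuous convergence of the family `F` to `f` along `l`, in the sense of Carathéodory: the
values `F n y` converge to `f x` as `n` tends to `l` and `y` tends to `x` simultaneously. The joint
limit is encoded by the product filter `l ×ˢ 𝓝 x`. -/
def TendstoContinuously [TopologicalSpace Y] (F : ι → X → Y) (f : X → Y) (l : Filter ι) : Prop :=
  ∀ x, Tendsto (fun p : ι × X => F p.1 p.2) (l ×ˢ 𝓝 x) (𝓝 (f x))

namespace TendstoContinuously

theorem of_tendstoLocallyUniformly [UniformSpace Y] {F : ι → X → Y} {f : X → Y}
    (hF : TendstoLocallyUniformly F f l) (hf : Continuous f) : TendstoContinuously F f l :=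
  fun x => tendsto_comp_of_locally_uniform_limit hf.continuousAt tendsto_snd fun s hs => by
    obtain ⟨t, ht, hFt⟩ := hF s hs x
    exact ⟨t, ht, tendsto_fst.eventually hFt⟩

variable [TopologicalSpace Y] {F : ι → X → Y} {f : X → Y}

theorem tendsto_apply (hF : TendstoContinuously F f l) (x : X) :
    Tendsto (fun n => F n x) l (𝓝 (f x)) :=
  (hF x).comp (tendsto_id.prodMk tendsto_const_nhds)

theorem comp_prodMk {P Z : Type*} [TopologicalSpace P] [TopologicalSpace Z] {a : ι → P} {b : P}
    {h : P × Y → Z} (hF : TendstoContinuously F f l) (ha : Tendsto a l (𝓝 b))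
    (hh : Continuous h) :
    TendstoContinuously (fun n x => h (a n, F n x)) (fun x => h (b, f x)) l :=
  fun x => (hh.tendsto (b, f x)).comp ((ha.comp tendsto_fst).prodMk_nhds (hF x))

/-- The consistency principle for extremum estimators: `F n` is the sample objective, `u n` the
estimator, and `b n` typically the sample objective at `x₀` plus a vanishing slack. -/
theorem tendsto_of_lt_of_le [CompactSpace X] [LinearOrder Y] [OrderClosedTopology Y]
    {u : ι → X} {b : ι → Y} {x₀ : X} {y₀ : Y} (hF : TendstoContinuously F f l)
    (hlt : ∀ x, x ≠ x₀ → y₀ < f x) (hb : Tendsto b l (𝓝 y₀))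
    (hle : ∀ᶠ n in l, F n (u n) ≤ b n) : Tendsto u l (𝓝 x₀) := by
  refine tendsto_nhds_of_unique_mapClusterPt fun x hx => ?_
  by_contra hne
  have hgap : ∀ᶠ p : ι × X in l ×ˢ 𝓝 x, b p.1 < F p.1 p.2 :=
    (hb.comp tendsto_fst).eventually_lt (hF x) (hlt x hne)
  obtain ⟨pn, hpn, px, hpx, hgap⟩ := eventually_prod_iff.1 hgap
  obtain ⟨n, hun, hn, hlen⟩ := ((hx.frequently hpx).and_eventually (hpn.and hle)).exists
  exact (hgap hn hun).not_ge hlen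

end TendstoContinuously

end ContinuousConvergence

theorem gmm_consistency_general {Θ ι κ : Type*} [TopologicalSpace Θ] [CompactSpace Θ] [Fintype κ]
    {l : Filter ι} {θ₀ : Θ} {g : Θ → κ → ℝ} (hg_cont : Continuous g)
    (hg_zero : ∀ θ, g θ = 0 ↔ θ = θ₀) {gN : ι → Θ → κ → ℝ} (hunif : TendstoUniformly gN g l)
    {WN : ι → Matrix κ κ ℝ} {W : Matrix κ κ ℝ} (hW : ∀ v, v ≠ 0 → 0 < v ⬝ᵥ (W *ᵥ v))
    (hWconv : Tendsto WN l (𝓝 W)) {θhat : ι → Θ} {ε : ι → ℝ} (hε : Tendsto ε l (𝓝 0))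
    (hmin : ∀ᶠ n in l, gN n (θhat n) ⬝ᵥ (WN n *ᵥ gN n (θhat n)) ≤
      gN n θ₀ ⬝ᵥ (WN n *ᵥ gN n θ₀) + ε n) :
    Tendsto θhat l (𝓝 θ₀) := by
  have hform : Continuous fun p : Matrix κ κ ℝ × (κ → ℝ) => p.2 ⬝ᵥ (p.1 *ᵥ p.2) :=
    continuous_snd.dotProduct (continuous_fst.matrix_mulVec continuous_snd)
  have hobj : TendstoContinuously (fun n θ => gN n θ ⬝ᵥ (WN n *ᵥ gN n θ))
      (fun θ => g θ ⬝ᵥ (W *ᵥ g θ)) l :=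
    (TendstoContinuously.of_tendstoLocallyUniformly hunif.tendstoLocallyUniformly
      hg_cont).comp_prodMk hWconv hform
  have hpos : ∀ θ, θ ≠ θ₀ → 0 < g θ ⬝ᵥ (W *ᵥ g θ) :=
    fun θ hθ => hW (g θ) (mt (hg_zero θ).1 hθ)
  have hbound : Tendsto (fun n => gN n θ₀ ⬝ᵥ (WN n *ᵥ gN n θ₀) + ε n) l (𝓝 0) := by
    simpa [(hg_zero θ₀).2 rfl] using (hobj.tendsto_apply θ₀).add hε
  exact hobj.tendsto_of_lt_of_le hpos hbound hmin

/-- **Consistency of the GMM estimator.**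
On a compact metric parameter space `Θ`, if the population moment `g` is continuous and
vanishes exactly at `θ₀`, the sample moments `gN` converge uniformly to `g`, and the PSD
weighting matrices `WN` converge to a positive definite `W`, then any sequence of global
minimizers of the weighted least-squares objective converges to `θ₀`. -/
theorem gmm_consistency
    {Θ : Type*} [MetricSpace Θ] [CompactSpace Θ]
    (m : ℕ) (hm : 1 ≤ m) (θ₀ : Θ)
    (g : Θ → (Fin m → ℝ)) (hg_cont : Continuous g)
    (hg_zero : ∀ θ : Θ, g θ = 0 ↔ θ = θ₀)
    (gN : ℕ → Θ → (Fin m → ℝ))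
    (hunif : TendstoUniformly gN g atTop)
    (WN : ℕ → Matrix (Fin m) (Fin m) ℝ)
    (hWN : ∀ n, (WN n).PosSemidef)
    (W : Matrix (Fin m) (Fin m) ℝ) (hW : W.PosDef)
    (hWconv : ∀ i j : Fin m, Tendsto (fun n => WN n i j) atTop (nhds (W i j)))
    (θhat : ℕ → Θ)
    (hmin : ∀ (n : ℕ) (θ : Θ),
      gN n (θhat n) ⬝ᵥ (WN n *ᵥ gN n (θhat n)) ≤ gN n θ ⬝ᵥ (WN n *ᵥ gN n θ)) :
    Tendsto θhat atTop (nhds θ₀) :=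
  gmm_consistency_general hg_cont hg_zero hunif (fun _ hv => hW.dotProduct_mulVec_pos hv)
    (tendsto_pi_nhds.2 fun i => tendsto_pi_nhds.2 (hWconv i)) tendsto_const_nhds
    (.of_forall fun n => by simpa using hmin n θ₀)
end

section
/- Optimal choice of the GMM weighting matrix (lower bound): let m ≥ k ≥ 1 be integers, let S be a symmetric positive definite m×m real matrix, let G be an m×k real matrix of rank k, and let W be a symmetric positive definite m×m real matrix. Then the k×k matrices GᵀWG and GᵀS⁻¹G are invertible, and with M = (GᵀWG)⁻¹GᵀW, the asymptotic covariance M S Mᵀ dominates the optimal one: M S Mᵀ − (GᵀS⁻¹G)⁻¹ is positive semidefinite. -/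
/-!
Both `M = (GᵀWG)⁻¹GᵀW` and its instance `L = V GᵀS⁻¹` at `W = S⁻¹`, where `V = (GᵀS⁻¹G)⁻¹`, are left
inverses of `G`. Since `L S = V Gᵀ`, every left inverse `M` satisfies `L S Mᵀ = V = M S Lᵀ`, and
`L S Lᵀ = V` in particular. Expanding `(M - L) S (M - L)ᵀ` therefore leaves `M S Mᵀ - V`, which is
thus positive semidefinite.
-/

open Matrix

section Field

variable {K m n : Type*} [Field K] [Fintype n]

lemma mulVec_injective_iff_rank_eq_card [Finite m] {G : Matrix m n K} :
    Function.Injective G.mulVec ↔ G.rank = Fintype.card n := by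
  rw [mulVec_injective_iff, linearIndependent_iff_card_eq_finrank_span, Set.finrank,
    ← rank_eq_finrank_span_cols, eq_comm]

end Field

section StarRing

variable {R m n : Type*} [CommRing R] [StarRing R] [Fintype m] [Fintype n] [DecidableEq n]
  {S W : Matrix m m R} {G : Matrix m n R} {M : Matrix n m R}

/-- The matrix `M = (GᴴWG)⁻¹GᴴW` of least squares with weighting matrix `W`. The GMM estimator with
moment covariance `S` and Jacobian `G` has asymptotic covariance `M S Mᴴ`. The matrix `M` is a left
inverse of `G` when `GᴴWG` is invertible, and `0` otherwise. -/
noncomputable def weightedLeftInverse (W : Matrix m m R) (G : Matrix m n R) : Matrix n m R :=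
  (Gᴴ * W * G)⁻¹ * Gᴴ * W

lemma weightedLeftInverse_mul_self (h : IsUnit (Gᴴ * W * G)) :
    weightedLeftInverse W G * G = 1 := by
  simpa only [weightedLeftInverse, Matrix.mul_assoc] using
    nonsing_inv_mul _ ((isUnit_iff_isUnit_det _).1 h)

variable [DecidableEq m]

lemma weightedLeftInverse_inv_mul (hS : IsUnit S) :
    weightedLeftInverse S⁻¹ G * S = (Gᴴ * S⁻¹ * G)⁻¹ * Gᴴ :=
  nonsing_inv_mul_cancel_right _ _ ((isUnit_iff_isUnit_det _).1 hS)

lemma weightedLeftInverse_inv_mul_mul_conjTranspose (hS : IsUnit S) (hM : M * G = 1) :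
    weightedLeftInverse S⁻¹ G * S * Mᴴ = (Gᴴ * S⁻¹ * G)⁻¹ := by
  rw [weightedLeftInverse_inv_mul hS, Matrix.mul_assoc, ← conjTranspose_mul, hM,
    conjTranspose_one, Matrix.mul_one]

lemma mul_mul_conjTranspose_weightedLeftInverse_inv (hS : IsUnit S) (hS_herm : S.IsHermitian)
    (hM : M * G = 1) :
    M * S * (weightedLeftInverse S⁻¹ G)ᴴ = (Gᴴ * S⁻¹ * G)⁻¹ := by
  have hV : ((Gᴴ * S⁻¹ * G)⁻¹).IsHermitian :=
    (isHermitian_conjTranspose_mul_mul G hS_herm.inv).inv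
  rw [← hV.eq, ← weightedLeftInverse_inv_mul_mul_conjTranspose hS hM]
  simp only [conjTranspose_mul, conjTranspose_conjTranspose, hS_herm.eq, Matrix.mul_assoc]

lemma sub_weightedLeftInverse_inv_mul_mul_conjTranspose_self (hS : IsUnit S)
    (hS_herm : S.IsHermitian) (hG : IsUnit (Gᴴ * S⁻¹ * G)) (hM : M * G = 1) :
    (M - weightedLeftInverse S⁻¹ G) * S * (M - weightedLeftInverse S⁻¹ G)ᴴ =
      M * S * Mᴴ - (Gᴴ * S⁻¹ * G)⁻¹ := by
  have hL := weightedLeftInverse_mul_self hG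
  rw [conjTranspose_sub, Matrix.mul_sub, Matrix.sub_mul, Matrix.sub_mul, Matrix.sub_mul,
    weightedLeftInverse_inv_mul_mul_conjTranspose hS hM,
    weightedLeftInverse_inv_mul_mul_conjTranspose hS hL,
    mul_mul_conjTranspose_weightedLeftInverse_inv hS hS_herm hM, sub_self, sub_zero]

end StarRing

section PosDef

variable {K m n : Type*} [Field K] [PartialOrder K] [StarRing K]
  [Fintype m] [Fintype n] [DecidableEq m] [DecidableEq n]
  {S W : Matrix m m K} {G : Matrix m n K} {M : Matrix n m K}

/-- The Gauss–Markov theorem: `M * G = 1` says that the linear estimator `M` is unbiased. -/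
theorem posSemidef_mul_mul_conjTranspose_sub_inv (hS : S.PosDef) (hM : M * G = 1) :
    (M * S * Mᴴ - (Gᴴ * S⁻¹ * G)⁻¹).PosSemidef := by
  have hinj : Function.Injective G.mulVec :=
    Function.LeftInverse.injective (g := M.mulVec) fun v ↦ by
      rw [mulVec_mulVec, hM, one_mulVec]
  rw [← sub_weightedLeftInverse_inv_mul_mul_conjTranspose_self hS.isUnit hS.isHermitian
    (hS.inv.conjTranspose_mul_mul_same hinj).isUnit hM]
  exact hS.posSemidef.mul_mul_conjTranspose_same _

theorem gmm_weighting_lower_bound_general (hS : S.PosDef) (hG : G.rank = Fintype.card n)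
    (hW : W.PosDef) :
    IsUnit (Gᴴ * W * G) ∧ IsUnit (Gᴴ * S⁻¹ * G) ∧
      (weightedLeftInverse W G * S * (weightedLeftInverse W G)ᴴ
        - (Gᴴ * S⁻¹ * G)⁻¹).PosSemidef := by
  have hinj : Function.Injective G.mulVec := mulVec_injective_iff_rank_eq_card.2 hG
  have hGW : IsUnit (Gᴴ * W * G) := (hW.conjTranspose_mul_mul_same hinj).isUnit
  have hGS : IsUnit (Gᴴ * S⁻¹ * G) := (hS.inv.conjTranspose_mul_mul_same hinj).isUnit
  exact ⟨hGW, hGS,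
    posSemidef_mul_mul_conjTranspose_sub_inv hS (weightedLeftInverse_mul_self hGW)⟩

end PosDef

/-- **Optimal choice of the GMM weighting matrix (lower bound).**
For a positive definite `m×m` matrix `S`, a full-column-rank `m×k` matrix `G`, and a
positive definite weighting matrix `W`, the matrices `GᵀWG` and `GᵀS⁻¹G` are invertible,
and with `M = (GᵀWG)⁻¹GᵀW`, the difference `M S Mᵀ - (GᵀS⁻¹G)⁻¹` is positive
semidefinite. -/
theorem gmm_weighting_lower_bound
    (m k : ℕ) (hk : 1 ≤ k) (hmk : k ≤ m)
    (S : Matrix (Fin m) (Fin m) ℝ) (hS : S.PosDef)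
    (G : Matrix (Fin m) (Fin k) ℝ) (hG : G.rank = k)
    (W : Matrix (Fin m) (Fin m) ℝ) (hW : W.PosDef) :
    IsUnit (Gᵀ * W * G) ∧ IsUnit (Gᵀ * S⁻¹ * G) ∧
      ((Gᵀ * W * G)⁻¹ * Gᵀ * W * S * ((Gᵀ * W * G)⁻¹ * Gᵀ * W)ᵀ
          - (Gᵀ * S⁻¹ * G)⁻¹).PosSemidef := by
  simpa only [weightedLeftInverse, conjTranspose_eq_transpose_of_trivial] using
    gmm_weighting_lower_bound_general hS (hG.trans (Fintype.card_fin k).symm) hW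
end
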